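/- arXiv:2211.00308 — 2 statements merged into one kernel-verified Lean document; each statement's English description precedes it below -/
import Mathlib

section
/- Let γ > 0, p > 1, a > 0, b > 0. There exist positive constants K₁ and K₂, depending only on γ, p, a, b but not on T, such that: for every T > 0 and every twice continuously differentiable function w on [0,T] with w ≢ 0 satisfying, for almost every t ∈ [0,T], w''(t) + a·w(t) ≥ b·(₀I_t^γ (|w|^p))(t), the inequality T·w'(0) + w(0) ≤ K₁·T^{2+γ−pγ/(p−1)} + K₂·T^{−(2+γ)/(p−1)} holds. -/
/-!
The inequality is scale covariant: `t ↦ w (T t)` solves it on `[0, 1]` with `a`, `b` replaced by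
`T² a`, `T^{2+γ} b`, so all powers of `T` come from scaling and it suffices to bound
`w' 0 + w 0` on `[0, 1]`. There, test the inequality with `ψ ≥ 0` vanishing to high order at `1`
and normalised by `ψ 0 = 1`, `ψ' 0 = -1`. Integrating by parts twice and moving `₀I_t^γ` onto `ψ`
gives
`w' 0 + w 0 ≤ ∫ (ψ'' w + a ψ |w|) - b ∫ |w|^p ₜI_1^γ ψ`.
Near `t = 1` the adjoint integral `ₜI_1^γ ψ` vanishes only `γ + 2` orders faster than `ψ''`; once
that common order of vanishing is large, Young's inequality absorbs the linear terms into the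
negative one, up to a constant independent of `w`.
-/

open MeasureTheory Filter

/-- Riemann–Liouville fractional integral of order `σ` based at `0`:
`(₀I_t^σ f)(t) = (1/Γ(σ)) ∫₀ᵗ (t−s)^{σ−1} f(s) ds`. -/
noncomputable def rlInt (σ : ℝ) (f : ℝ → ℝ) (t : ℝ) : ℝ :=
  (1 / Real.Gamma σ) * ∫ s in (0:ℝ)..t, (t - s) ^ (σ - 1) * f s

open Set
open scoped Pointwise

section Young

theorem mul_le_mul_rpow_add_rpow_mul_rpow {p q x y B : ℝ} (hpq : p.HolderConjugate q)
    (hx : 0 ≤ x) (hy : 0 ≤ y) (hB : 0 < B) :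
    x * y ≤ B * x ^ p + y ^ q * B ^ (1 - q) := by
  have hBp : B ^ p⁻¹ * B ^ (-p⁻¹) = 1 := by rw [← Real.rpow_add hB]; simp
  have hpow_p : (B ^ p⁻¹ * x) ^ p = B * x ^ p := by
    rw [Real.mul_rpow (by positivity) hx, Real.rpow_inv_rpow hB.le hpq.ne_zero]
  have hpow_q : (y * B ^ (-p⁻¹)) ^ q = y ^ q * B ^ (1 - q) := by
    rw [Real.mul_rpow hy (by positivity), ← Real.rpow_mul hB.le]
    congr 2
    have := hpq.symm.div_conj_eq_sub_one
    rw [div_eq_mul_inv] at this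
    linarith
  calc x * y = B ^ p⁻¹ * x * (y * B ^ (-p⁻¹)) := by linear_combination (-(x * y)) * hBp
    _ ≤ (B ^ p⁻¹ * x) ^ p / p + (y * B ^ (-p⁻¹)) ^ q / q :=
      Real.young_inequality_of_nonneg (by positivity) (by positivity) hpq
    _ ≤ (B ^ p⁻¹ * x) ^ p + (y * B ^ (-p⁻¹)) ^ q :=
      add_le_add (div_le_self (by positivity) hpq.lt.le)
        (div_le_self (by positivity) hpq.symm.lt.le)
    _ = B * x ^ p + y ^ q * B ^ (1 - q) := by rw [hpow_p, hpow_q]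

theorem mul_mul_rpow_le_of_mul_sub_one_le {p q x u B L κ ν : ℝ} (hpq : p.HolderConjugate q)
    (hx : 0 ≤ x) (hu : 0 < u) (hu1 : u ≤ 1) (hB : 0 < B) (hL : 0 ≤ L) (hν : κ * (q - 1) ≤ ν) :
    x * (L * u ^ ν) ≤ B * u ^ (κ + ν) * x ^ p + L ^ q * B ^ (1 - q) := by
  have hrem : (L * u ^ ν) ^ q * (B * u ^ (κ + ν)) ^ (1 - q) =
      L ^ q * B ^ (1 - q) * u ^ (ν - κ * (q - 1)) := by
    rw [Real.mul_rpow hL (by positivity), Real.mul_rpow hB.le (by positivity),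
      ← Real.rpow_mul hu.le, ← Real.rpow_mul hu.le,
      show ν - κ * (q - 1) = ν * q + (κ + ν) * (1 - q) by ring, Real.rpow_add hu]
    ring
  calc x * (L * u ^ ν)
      ≤ B * u ^ (κ + ν) * x ^ p + (L * u ^ ν) ^ q * (B * u ^ (κ + ν)) ^ (1 - q) :=
        mul_le_mul_rpow_add_rpow_mul_rpow hpq hx (by positivity) (by positivity)
    _ ≤ B * u ^ (κ + ν) * x ^ p + L ^ q * B ^ (1 - q) := by
        rw [hrem]
        exact add_le_add_right (mul_le_of_le_one_right (by positivity)
          (Real.rpow_le_one hu.le hu1 (sub_nonneg.2 hν))) _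

theorem one_add_rpow_le_two_rpow_mul {q x : ℝ} (hq : 1 ≤ q) (hx : 0 ≤ x) :
    (1 + x) ^ q ≤ 2 ^ (q - 1) * (1 + x ^ q) := by
  lift x to NNReal using hx
  have h := NNReal.rpow_add_le_mul_rpow_add_rpow 1 x hq
  rw [NNReal.one_rpow] at h
  exact_mod_cast h

end Young

/-- The right-sided Riemann–Liouville fractional integral `(ₜI_T^σ g)(s)`, the formal adjoint of
`rlInt σ` on `[0, T]`. -/
noncomputable def rlIntRight (σ T : ℝ) (g : ℝ → ℝ) (s : ℝ) : ℝ :=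
  (1 / Real.Gamma σ) * ∫ t in s..T, (t - s) ^ (σ - 1) * g t

theorem rlInt_mul_left {c t : ℝ} (hc : 0 < c) (ht : 0 ≤ t) (σ : ℝ) (f : ℝ → ℝ) :
    rlInt σ f (c * t) = c ^ σ * rlInt σ (fun s => f (c * s)) t := by
  have hker : ∫ s in (0 : ℝ)..t, (c * t - c * s) ^ (σ - 1) * f (c * s) =
      c ^ (σ - 1) * ∫ s in (0 : ℝ)..t, (t - s) ^ (σ - 1) * f (c * s) := by
    rw [← intervalIntegral.integral_const_mul]
    refine intervalIntegral.integral_congr fun s hs => ?_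
    rw [uIcc_of_le ht] at hs
    simp only [← mul_sub, Real.mul_rpow hc.le (sub_nonneg.2 hs.2), mul_assoc]
  have hsubst := intervalIntegral.mul_integral_comp_mul_left (a := 0) (b := t)
    (f := fun x => (c * t - x) ^ (σ - 1) * f x) c
  rw [mul_zero, hker] at hsubst
  rw [rlInt, rlInt, ← hsubst, Real.rpow_sub_one hc.ne']
  field_simp

theorem rlIntRight_sub_rpow {s T : ℝ} (hs : s < T) (σ μ : ℝ) :
    rlIntRight σ T (fun t => (T - t) ^ μ) s =
      rlIntRight σ 1 (fun t => (1 - t) ^ μ) 0 * (T - s) ^ (σ + μ) := by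
  have hd : 0 < T - s := sub_pos.2 hs
  have hker : ∫ x in (0 : ℝ)..1, ((T - s) * x) ^ (σ - 1) * (T - ((T - s) * x + s)) ^ μ =
      (T - s) ^ (σ - 1 + μ) * ∫ x in (0 : ℝ)..1, x ^ (σ - 1) * (1 - x) ^ μ := by
    rw [← intervalIntegral.integral_const_mul]
    refine intervalIntegral.integral_congr fun x hx => ?_
    rw [uIcc_of_le zero_le_one] at hx
    rw [show T - ((T - s) * x + s) = (T - s) * (1 - x) by ring, Real.mul_rpow hd.le hx.1,
      Real.mul_rpow hd.le (sub_nonneg.2 hx.2), Real.rpow_add hd]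
    ring
  have hsubst := intervalIntegral.mul_integral_comp_mul_add (a := 0) (b := 1)
    (f := fun t => (t - s) ^ (σ - 1) * (T - t) ^ μ) (T - s) s
  simp only [add_sub_cancel_right, mul_zero, zero_add, mul_one, sub_add_cancel, hker] at hsubst
  simp only [rlIntRight, ← hsubst, sub_zero]
  rw [show σ + μ = σ - 1 + μ + 1 by ring, Real.rpow_add_one hd.ne']
  ring

theorem intervalIntegrable_rpow_sub_mul {σ s T : ℝ} {g : ℝ → ℝ} (hσ : 0 < σ) (hs : s ≤ T)
    (hg : ContinuousOn g (Icc s T)) :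
    IntervalIntegrable (fun t => (t - s) ^ (σ - 1) * g t) volume s T := by
  have hker : IntervalIntegrable (fun t => (t - s) ^ (σ - 1)) volume s T := by
    simpa using (intervalIntegral.intervalIntegrable_rpow' (a := 0) (b := T - s)
      (by linarith : -1 < σ - 1)).comp_sub_right s
  exact hker.mul_continuousOn (by rwa [uIcc_of_le hs])

theorem rlIntRight_mono {σ s T : ℝ} {g₁ g₂ : ℝ → ℝ} (hσ : 0 < σ) (hs : s ≤ T)
    (hg₁ : ContinuousOn g₁ (Icc s T)) (hg₂ : ContinuousOn g₂ (Icc s T))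
    (hle : ∀ t ∈ Icc s T, g₁ t ≤ g₂ t) :
    rlIntRight σ T g₁ s ≤ rlIntRight σ T g₂ s := by
  refine mul_le_mul_of_nonneg_left ?_ (one_div_pos.2 (Real.Gamma_pos_of_pos hσ)).le
  exact intervalIntegral.integral_mono_on hs (intervalIntegrable_rpow_sub_mul hσ hs hg₁)
    (intervalIntegrable_rpow_sub_mul hσ hs hg₂) fun t ht =>
      mul_le_mul_of_nonneg_left (hle t ht) (Real.rpow_nonneg (sub_nonneg.2 ht.1) _)

theorem rlIntRight_pos {σ s T : ℝ} {g : ℝ → ℝ} (hσ : 0 < σ) (hs : s < T)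
    (hg : ContinuousOn g (Icc s T)) (hpos : ∀ t ∈ Ioo s T, 0 < g t) :
    0 < rlIntRight σ T g s := by
  refine mul_pos (one_div_pos.2 (Real.Gamma_pos_of_pos hσ)) ?_
  exact intervalIntegral.intervalIntegral_pos_of_pos_on
    (intervalIntegrable_rpow_sub_mul hσ hs.le hg)
    (fun t ht => mul_pos (Real.rpow_pos_of_pos (sub_pos.2 ht.1) _) (hpos t ht)) hs

/-- The Riemann–Liouville convolution kernel `x^{σ-1}/Γ(σ)`, truncated to `(0, T]` so that it is
integrable on `ℝ`. For `s, t ∈ (0, T]` the value at `t - s` vanishes unless `s < t`. -/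
noncomputable def rlKernel (σ T : ℝ) : ℝ → ℝ :=
  (Ioc 0 T).indicator fun x => x ^ (σ - 1) / Real.Gamma σ

theorem integrable_rlKernel {σ : ℝ} (hσ : 0 < σ) (T : ℝ) : Integrable (rlKernel σ T) := by
  refine (integrable_indicator_iff measurableSet_Ioc).2 (Integrable.div_const ?_ _)
  exact (intervalIntegral.intervalIntegrable_rpow' (by linarith)).1

theorem integrable_mul_rlKernel_prod {σ T : ℝ} {f g : ℝ → ℝ} (hσ : 0 < σ)
    (hf : IntegrableOn f (Ioc 0 T)) (hg : ContinuousOn g (Icc 0 T)) :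
    Integrable (fun z : ℝ × ℝ => g z.1 * (f z.2 * rlKernel σ T (z.1 - z.2)))
      ((volume.restrict (Ioc 0 T)).prod (volume.restrict (Ioc 0 T))) := by
  obtain ⟨C, hC⟩ := isCompact_Icc.exists_bound_of_continuousOn hg
  have hconv : Integrable (fun z : ℝ × ℝ => f z.2 * rlKernel σ T (z.1 - z.2))
      ((volume.restrict (Ioc 0 T)).prod (volume.restrict (Ioc 0 T))) :=
    (hf.convolution_integrand (.mul ℝ ℝ) (integrable_rlKernel hσ T)).mono_measure
      (Measure.prod_mono Measure.restrict_le_self le_rfl)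
  refine hconv.bdd_mul (c := C)
    ((hg.mono Ioc_subset_Icc_self).aestronglyMeasurable measurableSet_Ioc).comp_fst ?_
  exact Measure.quasiMeasurePreserving_fst.ae <| (ae_restrict_mem measurableSet_Ioc).mono
    fun t ht => hC t (Ioc_subset_Icc_self ht)

theorem rlKernel_sub {s t T : ℝ} (σ : ℝ) (hs : s ∈ Ioc 0 T) (ht : t ∈ Ioc 0 T) :
    rlKernel σ T (t - s) = if s < t then (t - s) ^ (σ - 1) / Real.Gamma σ else 0 := by
  have hle : t ≤ T + s := by linarith [hs.1, ht.2]
  simp [rlKernel, indicator, hle]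

theorem setIntegral_mul_rlKernel_eq_rlInt {t T : ℝ} (σ : ℝ) (f : ℝ → ℝ) (ht : t ∈ Ioc 0 T) :
    ∫ s in Ioc 0 T, f s * rlKernel σ T (t - s) = rlInt σ f t := by
  have hcongr : EqOn (fun s => f s * rlKernel σ T (t - s))
      ((Iio t).indicator fun s => 1 / Real.Gamma σ * ((t - s) ^ (σ - 1) * f s)) (Ioc 0 T) := by
    intro s hs
    simp only [rlKernel_sub σ hs ht, indicator, mem_Iio]
    split_ifs <;> ring
  have hinter : Ioc 0 T ∩ Iio t = Ioo 0 t := by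
    ext s
    exact ⟨fun h => ⟨h.1.1, h.2⟩, fun h => ⟨⟨h.1, h.2.le.trans ht.2⟩, h.2⟩⟩
  rw [setIntegral_congr_fun measurableSet_Ioc hcongr, setIntegral_indicator measurableSet_Iio,
    hinter, integral_const_mul, ← integral_Ioc_eq_integral_Ioo,
    ← intervalIntegral.integral_of_le ht.1.le, rlInt]

theorem setIntegral_mul_rlKernel_eq_rlIntRight {s T : ℝ} (σ : ℝ) (g : ℝ → ℝ)
    (hs : s ∈ Ioc 0 T) : ∫ t in Ioc 0 T, g t * rlKernel σ T (t - s) = rlIntRight σ T g s := by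
  have hcongr : EqOn (fun t => g t * rlKernel σ T (t - s))
      ((Ioi s).indicator fun t => 1 / Real.Gamma σ * ((t - s) ^ (σ - 1) * g t)) (Ioc 0 T) := by
    intro t ht
    simp only [rlKernel_sub σ hs ht, indicator, mem_Ioi]
    split_ifs <;> ring
  rw [setIntegral_congr_fun measurableSet_Ioc hcongr, setIntegral_indicator measurableSet_Ioi,
    Ioc_inter_Ioi, max_eq_right hs.1.le, integral_const_mul,
    ← intervalIntegral.integral_of_le hs.2, rlIntRight]

section Adjoint

variable {σ T : ℝ} {f g : ℝ → ℝ}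

theorem integrableOn_mul_rlInt (hσ : 0 < σ) (hf : IntegrableOn f (Ioc 0 T))
    (hg : ContinuousOn g (Icc 0 T)) : IntegrableOn (fun t => g t * rlInt σ f t) (Ioc 0 T) := by
  refine (integrable_mul_rlKernel_prod hσ hf hg).integral_prod_left.congr ?_
  filter_upwards [ae_restrict_mem measurableSet_Ioc] with t ht
  rw [integral_const_mul, setIntegral_mul_rlKernel_eq_rlInt σ f ht]

theorem integrableOn_mul_rlIntRight (hσ : 0 < σ) (hf : IntegrableOn f (Ioc 0 T))
    (hg : ContinuousOn g (Icc 0 T)) :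
    IntegrableOn (fun s => f s * rlIntRight σ T g s) (Ioc 0 T) := by
  refine (integrable_mul_rlKernel_prod hσ hf hg).integral_prod_right.congr ?_
  filter_upwards [ae_restrict_mem measurableSet_Ioc] with s hs
  simp only [mul_left_comm (g _), integral_const_mul, setIntegral_mul_rlKernel_eq_rlIntRight σ g hs]

theorem setIntegral_mul_rlInt_eq (hσ : 0 < σ) (hf : IntegrableOn f (Ioc 0 T))
    (hg : ContinuousOn g (Icc 0 T)) :
    ∫ t in Ioc 0 T, g t * rlInt σ f t = ∫ s in Ioc 0 T, f s * rlIntRight σ T g s := by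
  calc ∫ t in Ioc 0 T, g t * rlInt σ f t
      = ∫ t in Ioc 0 T, ∫ s in Ioc 0 T, g t * (f s * rlKernel σ T (t - s)) :=
        setIntegral_congr_fun measurableSet_Ioc fun t ht => by
          simp only [integral_const_mul, setIntegral_mul_rlKernel_eq_rlInt σ f ht]
    _ = ∫ s in Ioc 0 T, ∫ t in Ioc 0 T, g t * (f s * rlKernel σ T (t - s)) :=
        integral_integral_swap (integrable_mul_rlKernel_prod hσ hf hg)
    _ = ∫ s in Ioc 0 T, f s * rlIntRight σ T g s :=
        setIntegral_congr_fun measurableSet_Ioc fun s hs => by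
          simp only [mul_left_comm (g _), integral_const_mul,
            setIntegral_mul_rlKernel_eq_rlIntRight σ g hs]

end Adjoint

theorem integral_mul_deriv_deriv_eq {u u' u'' v v' v'' : ℝ → ℝ} {a b : ℝ}
    (hu : ∀ x ∈ uIcc a b, HasDerivWithinAt u (u' x) (uIcc a b) x)
    (hu' : ∀ x ∈ uIcc a b, HasDerivWithinAt u' (u'' x) (uIcc a b) x)
    (hu'' : IntervalIntegrable u'' volume a b)
    (hv : ∀ x ∈ uIcc a b, HasDerivWithinAt v (v' x) (uIcc a b) x)
    (hv' : ∀ x ∈ uIcc a b, HasDerivWithinAt v' (v'' x) (uIcc a b) x)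
    (hv'' : IntervalIntegrable v'' volume a b) :
    ∫ x in a..b, v x * u'' x =
      v b * u' b - v a * u' a - (v' b * u b - v' a * u a) + ∫ x in a..b, v'' x * u x := by
  have hu'int : IntervalIntegrable u' volume a b :=
    ContinuousOn.intervalIntegrable fun x hx => (hu' x hx).continuousWithinAt
  have hv'int : IntervalIntegrable v' volume a b :=
    ContinuousOn.intervalIntegrable fun x hx => (hv' x hx).continuousWithinAt
  rw [intervalIntegral.integral_mul_deriv_eq_deriv_mul_of_hasDerivWithinAt hv hu' hv'int hu'',
    intervalIntegral.integral_mul_deriv_eq_deriv_mul_of_hasDerivWithinAt hv' hu hv'' hu'int]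
  ring

theorem ae_restrict_Icc_comp_mul_left {c : ℝ} (hc : 0 < c) {a b : ℝ} {P : ℝ → Prop}
    (h : ∀ᵐ t ∂volume.restrict (Icc (c * a) (c * b)), P t) :
    ∀ᵐ t ∂volume.restrict (Icc a b), P (c * t) := by
  rw [ae_restrict_iff' measurableSet_Icc] at h ⊢
  filter_upwards [(Measure.quasiMeasurePreserving_smul volume hc.ne').ae h] with t ht hmem
  exact ht ⟨mul_le_mul_of_nonneg_left hmem.1 hc.le, mul_le_mul_of_nonneg_left hmem.2 hc.le⟩

/-- The differential inequality `w'' + A |w| ≥ b ₀I_t^γ |w|^p` a.e. on `[0, T]`, where `w'` and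
`w''` are the first and second derivatives of `w` on `[0, T]` (one-sided at the endpoints). The
absolute value on the left makes it cover `w'' + a(t) w ≥ …` for every coefficient `|a| ≤ A`. -/
structure FractionalWaveIneq (γ p A b T : ℝ) (w w' w'' : ℝ → ℝ) : Prop where
  hasDerivWithinAt : ∀ t ∈ Icc 0 T, HasDerivWithinAt w (w' t) (Icc 0 T) t
  hasDerivWithinAt' : ∀ t ∈ Icc 0 T, HasDerivWithinAt w' (w'' t) (Icc 0 T) t
  intervalIntegrable : IntervalIntegrable w'' volume 0 T
  ae_le : ∀ᵐ t ∂volume.restrict (Icc 0 T),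
    b * rlInt γ (fun s => |w s| ^ p) t ≤ w'' t + A * |w t|

namespace FractionalWaveIneq

variable {γ p A b T : ℝ} {w w' w'' ψ : ℝ → ℝ}

theorem of_contDiff {a : ℝ} (hw : ContDiff ℝ 2 w) (ha : |a| ≤ A)
    (hineq : ∀ᵐ t ∂volume.restrict (Icc 0 T),
      b * rlInt γ (fun s => |w s| ^ p) t ≤ deriv (deriv w) t + a * w t) :
    FractionalWaveIneq γ p A b T w (deriv w) (deriv (deriv w)) where
  hasDerivWithinAt t _ := (hw.differentiable two_ne_zero t).hasDerivAt.hasDerivWithinAt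
  hasDerivWithinAt' t _ := (hw.differentiable_deriv_two t).hasDerivAt.hasDerivWithinAt
  intervalIntegrable := hw.deriv'.continuous_deriv_one.intervalIntegrable 0 T
  ae_le := by
    filter_upwards [hineq] with t ht
    refine ht.trans (add_le_add_right ((le_abs_self _).trans ?_) _)
    rw [abs_mul]
    gcongr

theorem comp_mul_left {c : ℝ} (hc : 0 < c) (h : FractionalWaveIneq γ p A b (c * T) w w' w'') :
    FractionalWaveIneq γ p (c ^ 2 * A) (c ^ (2 + γ) * b) T (fun t => w (c * t))
      (fun t => c * w' (c * t)) (fun t => c * (c * w'' (c * t))) := by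
  have hmul : ∀ t ∈ Icc 0 T, c * t ∈ Icc 0 (c * T) := fun t ht =>
    ⟨mul_nonneg hc.le ht.1, mul_le_mul_of_nonneg_left ht.2 hc.le⟩
  have hsmul : c • Icc 0 T = Icc 0 (c * T) := by
    simpa using LinearOrderedField.smul_Icc (a := 0) (b := T) hc
  refine ⟨fun t ht => ?_, fun t ht => HasDerivWithinAt.const_mul c ?_, ?_, ?_⟩
  · exact hasDerivWithinAt_comp_mul_left_smul_iff.2 (hsmul ▸ h.hasDerivWithinAt _ (hmul t ht))
  · exact hasDerivWithinAt_comp_mul_left_smul_iff.2 (hsmul ▸ h.hasDerivWithinAt' _ (hmul t ht))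
  · have hcomp := h.intervalIntegrable.comp_mul_left (c := c)
    rw [zero_div, mul_div_cancel_left₀ _ hc.ne'] at hcomp
    exact (hcomp.const_mul c).const_mul c
  · have hae := h.ae_le
    rw [← mul_zero c] at hae
    filter_upwards [ae_restrict_Icc_comp_mul_left hc hae, ae_restrict_mem measurableSet_Icc]
      with t hle ht
    rw [rlInt_mul_left hc ht.1] at hle
    have hscaled := mul_le_mul_of_nonneg_left hle (sq_nonneg c)
    rw [Real.rpow_add hc, Real.rpow_two]
    linarith

theorem continuousOn (h : FractionalWaveIneq γ p A b T w w' w'') : ContinuousOn w (Icc 0 T) :=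
  fun t ht => (h.hasDerivWithinAt t ht).continuousWithinAt

theorem integrableOn_abs_rpow (hp : 0 ≤ p) (h : FractionalWaveIneq γ p A b T w w' w'') :
    IntegrableOn (fun t => |w t| ^ p) (Ioc 0 T) :=
  (h.continuousOn.abs.rpow_const fun _ _ => Or.inr hp).integrableOn_Icc.mono_set
    Ioc_subset_Icc_self

theorem integrableOn_mul {φ : ℝ → ℝ} (h : FractionalWaveIneq γ p A b T w w' w'')
    (hφ : Continuous φ) : IntegrableOn (fun t => φ t * w t) (Ioc 0 T) :=
  (hφ.continuousOn.mul h.continuousOn).integrableOn_Icc.mono_set Ioc_subset_Icc_self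

theorem integrableOn_mul_abs {φ : ℝ → ℝ} (h : FractionalWaveIneq γ p A b T w w' w'')
    (hφ : Continuous φ) : IntegrableOn (fun t => φ t * |w t|) (Ioc 0 T) :=
  (hφ.continuousOn.mul h.continuousOn.abs).integrableOn_Icc.mono_set Ioc_subset_Icc_self

theorem integral_test_mul_eq (hT : 0 ≤ T) (h : FractionalWaveIneq γ p A b T w w' w'')
    (hψ : ContDiff ℝ 2 ψ) (hψT : ψ T = 0) (hψ'T : deriv ψ T = 0) :
    ∫ t in Ioc 0 T, ψ t * w'' t =
      (∫ t in Ioc 0 T, deriv (deriv ψ) t * w t) - (ψ 0 * w' 0 - deriv ψ 0 * w 0) := by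
  have hparts := integral_mul_deriv_deriv_eq (a := 0) (b := T) (v := ψ)
    (by simpa only [uIcc_of_le hT] using h.hasDerivWithinAt)
    (by simpa only [uIcc_of_le hT] using h.hasDerivWithinAt') h.intervalIntegrable
    (fun t _ => (hψ.differentiable two_ne_zero t).hasDerivAt.hasDerivWithinAt)
    (fun t _ => (hψ.differentiable_deriv_two t).hasDerivAt.hasDerivWithinAt)
    (hψ.deriv'.continuous_deriv_one.intervalIntegrable 0 T)
  rw [hψT, hψ'T, intervalIntegral.integral_of_le hT, intervalIntegral.integral_of_le hT] at hparts
  linarith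

theorem weak_form (hγ : 0 < γ) (hp : 0 ≤ p) (hT : 0 ≤ T)
    (h : FractionalWaveIneq γ p A b T w w' w'') (hψ : ContDiff ℝ 2 ψ)
    (hψ_nonneg : ∀ t ∈ Icc 0 T, 0 ≤ ψ t) (hψT : ψ T = 0) (hψ'T : deriv ψ T = 0) :
    ψ 0 * w' 0 - deriv ψ 0 * w 0 + ∫ t in Ioc 0 T, b * (|w t| ^ p * rlIntRight γ T ψ t) ≤
      ∫ t in Ioc 0 T, (deriv (deriv ψ) t * w t + A * (ψ t * |w t|)) := by
  have hwp := h.integrableOn_abs_rpow hp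
  have hψw'' : IntegrableOn (fun t => ψ t * w'' t) (Ioc 0 T) :=
    (h.intervalIntegrable.continuousOn_mul hψ.continuous.continuousOn).1
  have hψ''w := h.integrableOn_mul (hψ.deriv'.continuous_deriv_one)
  have hψw := (h.integrableOn_mul_abs hψ.continuous).const_mul A
  have htested : ∫ t in Ioc 0 T, b * (ψ t * rlInt γ (fun s => |w s| ^ p) t) ≤
      ∫ t in Ioc 0 T, (ψ t * w'' t + A * (ψ t * |w t|)) := by
    refine integral_mono_ae
      ((integrableOn_mul_rlInt hγ hwp hψ.continuous.continuousOn).const_mul b) (hψw''.add hψw) ?_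
    filter_upwards [ae_restrict_of_ae_restrict_of_subset Ioc_subset_Icc_self h.ae_le,
      ae_restrict_mem measurableSet_Ioc] with t hle ht
    have := mul_le_mul_of_nonneg_left hle (hψ_nonneg t (Ioc_subset_Icc_self ht))
    linarith
  rw [integral_add hψw'' hψw, h.integral_test_mul_eq hT hψ hψT hψ'T, integral_const_mul,
    setIntegral_mul_rlInt_eq hγ hwp hψ.continuous.continuousOn, ← integral_const_mul] at htested
  rw [integral_add hψ''w hψw]
  linarith

end FractionalWaveIneq

/-- The test function `(1 + (n+1) t) (1 - t)^{n+2}` on `[0, 1]`. It vanishes to order `n + 2` at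
`t = 1`, and the linear factor makes its value at `0` equal to `1` and its slope there `-1`. -/
noncomputable def testFn (n : ℕ) (t : ℝ) : ℝ :=
  (1 + (n + 1) * t) * (1 - t) ^ (n + 2)

section testFn

variable (n : ℕ) {t : ℝ}

theorem contDiff_testFn : ContDiff ℝ 2 (testFn n) := by
  unfold testFn
  fun_prop

theorem hasDerivAt_linear_mul_one_sub_pow (c d : ℝ) (k : ℕ) (t : ℝ) :
    HasDerivAt (fun t => (c + d * t) * (1 - t) ^ (k + 1))
      ((d * (1 - t) - (k + 1) * (c + d * t)) * (1 - t) ^ k) t := by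
  refine ((((hasDerivAt_id t).const_mul d).const_add c).mul
    (((hasDerivAt_id t).const_sub 1).pow (k + 1))).congr_deriv ?_
  simp
  ring

theorem deriv_testFn :
    deriv (testFn n) = fun t : ℝ =>
      (-1 + -(((n : ℝ) + 1) * (n + 3)) * t) * (1 - t) ^ (n + 1) := by
  funext t
  refine (hasDerivAt_linear_mul_one_sub_pow 1 (n + 1) (n + 1) t).deriv.trans ?_
  push_cast
  ring

theorem deriv_deriv_testFn :
    deriv (deriv (testFn n)) = fun t : ℝ =>
      ((n : ℝ) + 1) * (n + 2) * ((n + 3) * t - 1) * (1 - t) ^ n := by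
  rw [deriv_testFn]
  funext t
  refine (hasDerivAt_linear_mul_one_sub_pow (-1) (-((n + 1) * (n + 3))) n t).deriv.trans ?_
  ring

theorem one_sub_pow_le_testFn (ht : t ∈ Icc 0 1) : (1 - t) ^ (n + 2) ≤ testFn n t :=
  le_mul_of_one_le_left (pow_nonneg (sub_nonneg.2 ht.2) _)
    (le_add_of_nonneg_right (mul_nonneg (by positivity) ht.1))

theorem testFn_nonneg (ht : t ∈ Icc 0 1) : 0 ≤ testFn n t :=
  (pow_nonneg (sub_nonneg.2 ht.2) _).trans (one_sub_pow_le_testFn n ht)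

theorem testFn_le (ht : t ∈ Icc 0 1) : testFn n t ≤ (n + 2) * (1 - t) ^ n := by
  have hpow : (1 - t) ^ (n + 2) ≤ (1 - t) ^ n :=
    pow_le_pow_of_le_one (sub_nonneg.2 ht.2) (by linarith [ht.1]) (by lia)
  have hlin : 1 + ((n : ℝ) + 1) * t ≤ n + 2 := by nlinarith [ht.2]
  exact mul_le_mul hlin hpow (pow_nonneg (sub_nonneg.2 ht.2) _) (by positivity)

theorem abs_deriv_deriv_testFn_le (ht : t ∈ Icc 0 1) :
    |deriv (deriv (testFn n)) t| ≤ (n + 1) * (n + 2) ^ 2 * (1 - t) ^ n := by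
  have hlin : |((n : ℝ) + 3) * t - 1| ≤ n + 2 :=
    abs_le.2 ⟨by nlinarith [ht.1], by nlinarith [ht.2]⟩
  have hpow : 0 ≤ (1 - t) ^ n := pow_nonneg (sub_nonneg.2 ht.2) n
  rw [deriv_deriv_testFn, abs_mul, abs_mul, abs_of_nonneg hpow,
    abs_of_nonneg (by positivity : (0 : ℝ) ≤ (n + 1) * (n + 2)), sq, ← mul_assoc]
  gcongr

end testFn

theorem testFn_terms_le {A x t : ℝ} (n : ℕ) (hA : 0 ≤ A) (ht : t ∈ Icc 0 1) :
    deriv (deriv (testFn n)) t * x + A * (testFn n t * |x|) ≤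
      |x| * ((n + 1) * (n + 2) ^ 2 * (1 + A) * (1 - t) ^ (n : ℝ)) := by
  have hcoef : (n : ℝ) + 2 ≤ (n + 1) * (n + 2) ^ 2 := by
    have hn : (0 : ℝ) ≤ n := n.cast_nonneg
    nlinarith [mul_nonneg hn hn, pow_nonneg hn 3]
  have hpow : 0 ≤ (1 - t) ^ n := pow_nonneg (sub_nonneg.2 ht.2) n
  rw [Real.rpow_natCast]
  calc deriv (deriv (testFn n)) t * x + A * (testFn n t * |x|)
      ≤ |deriv (deriv (testFn n)) t| * |x| + A * (testFn n t * |x|) := by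
        rw [← abs_mul]; gcongr; exact le_abs_self _
    _ ≤ (n + 1) * (n + 2) ^ 2 * (1 - t) ^ n * |x| +
          A * ((n + 1) * (n + 2) ^ 2 * (1 - t) ^ n * |x|) := by
        gcongr
        · exact abs_deriv_deriv_testFn_le n ht
        · exact (testFn_le n ht).trans (by gcongr)
    _ = |x| * ((n + 1) * (n + 2) ^ 2 * (1 + A) * (1 - t) ^ n) := by ring

theorem exists_le_rlIntRight_testFn {γ : ℝ} (hγ : 0 < γ) (n : ℕ) :
    ∃ c > 0, ∀ s ∈ Ico (0 : ℝ) 1,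
      c * (1 - s) ^ (γ + 2 + n) ≤ rlIntRight γ 1 (testFn n) s := by
  have hcont : Continuous fun t : ℝ => (1 - t) ^ ((n + 2 : ℕ) : ℝ) := by
    simp only [Real.rpow_natCast]; fun_prop
  refine ⟨rlIntRight γ 1 (fun t => (1 - t) ^ ((n + 2 : ℕ) : ℝ)) 0,
    rlIntRight_pos hγ one_pos hcont.continuousOn
      fun t ht => Real.rpow_pos_of_pos (sub_pos.2 ht.2) _, fun s hs => ?_⟩
  rw [show γ + 2 + n = γ + (n + 2 : ℕ) by push_cast; ring, ← rlIntRight_sub_rpow hs.2]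
  refine rlIntRight_mono hγ hs.2.le hcont.continuousOn
    (contDiff_testFn n).continuous.continuousOn fun t ht => ?_
  rw [Real.rpow_natCast]
  exact one_sub_pow_le_testFn n ⟨hs.1.trans ht.1, ht.2⟩

theorem testFn_terms_le_add {γ p q A b c x t : ℝ} {n : ℕ} (hpq : p.HolderConjugate q)
    (hA : 0 ≤ A) (hb : 0 < b) (hc : 0 < c) (hn : (γ + 2) * (q - 1) ≤ n) (ht : t ∈ Ioo 0 1)
    (hlower : c * (1 - t) ^ (γ + 2 + n) ≤ rlIntRight γ 1 (testFn n) t) :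
    deriv (deriv (testFn n)) t * x + A * (testFn n t * |x|) ≤
      b * (|x| ^ p * rlIntRight γ 1 (testFn n) t) +
        ((n + 1) * (n + 2) ^ 2 * (1 + A)) ^ q * (b * c) ^ (1 - q) := by
  calc deriv (deriv (testFn n)) t * x + A * (testFn n t * |x|)
      ≤ |x| * ((n + 1) * (n + 2) ^ 2 * (1 + A) * (1 - t) ^ (n : ℝ)) :=
        testFn_terms_le n hA (Ioo_subset_Icc_self ht)
    _ ≤ b * c * (1 - t) ^ (γ + 2 + n) * |x| ^ p +
          ((n + 1) * (n + 2) ^ 2 * (1 + A)) ^ q * (b * c) ^ (1 - q) :=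
        mul_mul_rpow_le_of_mul_sub_one_le hpq (abs_nonneg x) (sub_pos.2 ht.2)
          (by linarith [ht.1]) (by positivity) (by positivity) hn
    _ = b * (|x| ^ p * (c * (1 - t) ^ (γ + 2 + n))) +
          ((n + 1) * (n + 2) ^ 2 * (1 + A)) ^ q * (b * c) ^ (1 - q) := by ring
    _ ≤ _ := by gcongr

theorem FractionalWaveIneq.exists_bound_unit_interval {γ p q : ℝ} (hγ : 0 < γ)
    (hpq : p.HolderConjugate q) :
    ∃ C > 0, ∀ {A b : ℝ} {w w' w'' : ℝ → ℝ}, 0 ≤ A → 0 < b →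
      FractionalWaveIneq γ p A b 1 w w' w'' →
      w' 0 + w 0 ≤ C * (1 + A) ^ q * b ^ (1 - q) := by
  obtain ⟨n, hn⟩ := exists_nat_ge ((γ + 2) * (q - 1))
  obtain ⟨c, hc, hlower⟩ := exists_le_rlIntRight_testFn hγ n
  refine ⟨((n + 1) * (n + 2) ^ 2) ^ q * c ^ (1 - q), by positivity,
    fun {A b w w' w''} hA hb h => ?_⟩
  have hψ := contDiff_testFn n
  have hlinear := (h.integrableOn_mul hψ.deriv'.continuous_deriv_one).add
    ((h.integrableOn_mul_abs hψ.continuous).const_mul A)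
  have hadjoint := (integrableOn_mul_rlIntRight hγ (h.integrableOn_abs_rpow hpq.nonneg)
    hψ.continuous.continuousOn).const_mul b
  have hmono : ∫ t in Ioc (0 : ℝ) 1,
        (deriv (deriv (testFn n)) t * w t + A * (testFn n t * |w t|)) ≤
      (∫ t in Ioc (0 : ℝ) 1, b * (|w t| ^ p * rlIntRight γ 1 (testFn n) t)) +
        ((n + 1) * (n + 2) ^ 2 * (1 + A)) ^ q * (b * c) ^ (1 - q) := by
    have hconst := integrable_const (μ := volume.restrict (Ioc (0 : ℝ) 1))
      (((n + 1) * (n + 2) ^ 2 * (1 + A)) ^ q * (b * c) ^ (1 - q))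
    refine (integral_mono_ae hlinear (hadjoint.add hconst) ?_).trans_eq ?_
    · rw [← restrict_Ioo_eq_restrict_Ioc]
      filter_upwards [ae_restrict_mem measurableSet_Ioo] with t ht
      exact testFn_terms_le_add hpq hA hb hc hn ht (hlower t (Ioo_subset_Ico_self ht))
    · simp [integral_add hadjoint hconst]
  have hweak := h.weak_form hγ hpq.nonneg zero_le_one hψ (fun t ht => testFn_nonneg n ht)
    (by simp [testFn]) (by simp [deriv_testFn])
  calc w' 0 + w 0 = testFn n 0 * w' 0 - deriv (testFn n) 0 * w 0 := by
        simp [testFn, deriv_testFn]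
    _ ≤ ((n + 1) * (n + 2) ^ 2 * (1 + A)) ^ q * (b * c) ^ (1 - q) := by linarith
    _ = ((n + 1) * (n + 2) ^ 2) ^ q * c ^ (1 - q) * (1 + A) ^ q * b ^ (1 - q) := by
        rw [Real.mul_rpow (by positivity) (by positivity), Real.mul_rpow hb.le hc.le]
        ring

theorem apriori_bound_wave_general {γ p : ℝ} (hγ : 0 < γ) (hp : 1 < p) :
    ∃ C > 0, ∀ {A b T : ℝ} {w w' w'' : ℝ → ℝ}, 0 ≤ A → 0 < b → 0 < T →
      FractionalWaveIneq γ p A b T w w' w'' →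
      T * w' 0 + w 0 ≤ C * b ^ (-(1 / (p - 1))) * (A ^ (p / (p - 1)) *
        T ^ (2 + γ - p * γ / (p - 1)) + T ^ (-(2 + γ) / (p - 1))) := by
  have hp1 : p - 1 ≠ 0 := (sub_pos.2 hp).ne'
  set q := p / (p - 1) with hq
  have hpq : p.HolderConjugate q := .conjExponent hp
  have hq_sub : 1 - q = -(1 / (p - 1)) := by rw [hq]; field_simp; ring
  obtain ⟨C, hC, hbound⟩ := FractionalWaveIneq.exists_bound_unit_interval hγ hpq
  refine ⟨C * 2 ^ (q - 1), by positivity, fun {A b T w w' w''} hA hb hT h => ?_⟩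
  have hunit : FractionalWaveIneq γ p (T ^ 2 * A) (T ^ (2 + γ) * b) 1 (fun t => w (T * t))
      (fun t => T * w' (T * t)) (fun t => T * (T * w'' (T * t))) :=
    .comp_mul_left hT (by rwa [mul_one])
  have hT2 : (T ^ 2) ^ q * T ^ ((2 + γ) * (1 - q)) = T ^ (2 + γ - p * γ / (p - 1)) := by
    rw [← Real.rpow_two, ← Real.rpow_mul hT.le, ← Real.rpow_add hT, hq]
    congr 1
    field_simp
    ring
  have hTγ : T ^ ((2 + γ) * (1 - q)) = T ^ (-(2 + γ) / (p - 1)) := by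
    rw [hq_sub]; congr 1; ring
  calc T * w' 0 + w 0
      ≤ C * (1 + T ^ 2 * A) ^ q * (T ^ (2 + γ) * b) ^ (1 - q) := by
        simpa using hbound (by positivity) (by positivity) hunit
    _ ≤ C * (2 ^ (q - 1) * (1 + (T ^ 2 * A) ^ q)) * (T ^ (2 + γ) * b) ^ (1 - q) := by
        gcongr
        exact one_add_rpow_le_two_rpow_mul hpq.symm.lt.le (by positivity)
    _ = C * 2 ^ (q - 1) * b ^ (1 - q) *
          (A ^ q * ((T ^ 2) ^ q * T ^ ((2 + γ) * (1 - q))) + T ^ ((2 + γ) * (1 - q))) := by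
        rw [Real.mul_rpow (by positivity) hA, Real.mul_rpow (by positivity) hb.le,
          ← Real.rpow_mul hT.le]
        ring
    _ = _ := by rw [hT2, hTγ, hq_sub]

/-- Corollary 2.6 (i): a priori bound for `w'' + a w ≥ b ₀I_t^γ |w|^p` with
constants `K₁, K₂` independent of `T`. -/
theorem apriori_bound_wave
    (γ p a b : ℝ) (hγ : 0 < γ) (hp : 1 < p) (ha : 0 < a) (hb : 0 < b) :
    ∃ K₁ > (0:ℝ), ∃ K₂ > (0:ℝ), ∀ T > (0:ℝ), ∀ w : ℝ → ℝ,
      ContDiff ℝ 2 w →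
      (∃ t ∈ Set.Icc (0:ℝ) T, w t ≠ 0) →
      (∀ᵐ t ∂(volume.restrict (Set.Icc (0:ℝ) T)),
        deriv (deriv w) t + a * w t ≥ b * rlInt γ (fun s => |w s| ^ p) t) →
      T * deriv w 0 + w 0
        ≤ K₁ * T ^ (2 + γ - p * γ / (p - 1)) + K₂ * T ^ (-(2 + γ) / (p - 1)) := by
  obtain ⟨C, hC, hbound⟩ := apriori_bound_wave_general hγ hp
  refine ⟨C * b ^ (-(1 / (p - 1))) * a ^ (p / (p - 1)), by positivity,
    C * b ^ (-(1 / (p - 1))), by positivity, fun T hT w hw _ hineq => ?_⟩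
  exact (hbound ha.le hb hT (.of_contDiff hw (abs_of_pos ha).le hineq)).trans_eq (by ring)
end

section
/- Let γ > 0, p > 1, a > 0, b > 0, and let β ≥ 2. Suppose w is twice continuously differentiable on [0,∞), w ≢ 0, and for almost every t ≥ 0, w''(t) + a·w(t) ≥ b·(₀I_t^γ (|w|^p))(t). Then liminf_{t→+∞} t^{1−γ−β}·(₀I_t^β w)(t) > 0. -/
/-!
Convolution of nonnegative functions growing at least like `t ^ κ` and `t ^ ν` grows at least like
`t ^ (κ + ν + 1)`. Put `ω = √a` and `F = w'' + ω² w`. The hypothesis and `w ≢ 0` make `F`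
nonnegative and growing at least like `t ^ (γ - 1)`. Duhamel's formula for the second primitive
of `w`,
`₀I_t² w (t) = ∫₀ᵗ k (t - s) F(s) ds + k(t) w'(0) + k'(t) w(0)`,
has the kernel `k(τ) = (τ - sin (ω τ) / ω) / ω²`, which, unlike the kernel `sin (ω τ) / ω` for `w`
itself, is nonnegative; it grows linearly. So the integral grows at least like `t ^ (γ + 1)`, and
since `γ > 0` this dominates the initial terms, which are `O(t)`. Finally
`₀I_t^β w = ₀I_t^(β - 2) (₀I_t² w)`, again a convolution with a nonnegative power function.
-/

open MeasureTheory Filter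

open Set Asymptotics

/-- `GrowsAtLeast μ g`: `g t` is eventually bounded below by a positive multiple of `t ^ μ`; that
is, `t ^ μ = O(g t)` as `t → ∞` with `g` eventually nonnegative. -/
def GrowsAtLeast (μ : ℝ) (g : ℝ → ℝ) : Prop :=
  ∃ c > 0, ∀ᶠ t in atTop, c * t ^ μ ≤ g t

lemma rpow_abs_mul_rpow_le {δ t x : ℝ} (hδ : 0 < δ) (ht : 0 < t) (hδx : δ * t ≤ x) (hxt : x ≤ t)
    (μ : ℝ) : δ ^ |μ| * t ^ μ ≤ x ^ μ := by
  have hδ' : δ ≤ x / t := (le_div_iff₀ ht).2 hδx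
  have hx : 0 < x / t := hδ.trans_le hδ'
  calc δ ^ |μ| * t ^ μ ≤ (x / t) ^ |μ| * t ^ μ := by gcongr
    _ ≤ (x / t) ^ μ * t ^ μ := by
        gcongr ?_ * _
        exact Real.rpow_le_rpow_of_exponent_ge hx ((div_le_one ht).2 hxt) (le_abs_self μ)
    _ = x ^ μ := by rw [← Real.mul_rpow hx.le ht.le, div_mul_cancel₀ _ ht.ne']

lemma isLittleO_id_rpow_atTop {μ : ℝ} (hμ : 1 < μ) :
    (fun t : ℝ => t) =o[atTop] fun t => t ^ μ := by
  refine isLittleO_of_tendsto' ?_ ((tendsto_rpow_neg_atTop (sub_pos.2 hμ)).congr' ?_)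
  · filter_upwards [eventually_gt_atTop 0] with t ht h
    exact absurd h (Real.rpow_pos_of_pos ht μ).ne'
  · filter_upwards [eventually_gt_atTop 0] with t ht
    rw [neg_sub, Real.rpow_sub ht, Real.rpow_one]

lemma le_on_Ici_of_ae_le {T : ℝ} {f g : ℝ → ℝ} (hf : ContinuousOn f (Ici T))
    (hg : ContinuousOn g (Ici T)) (h : ∀ᵐ t ∂volume.restrict (Ici T), f t ≤ g t) :
    ∀ t ≥ T, f t ≤ g t := by
  have hmin : EqOn (fun t => min (f t) (g t)) f (Ici T) :=
    Measure.eqOn_of_ae_eq (h.mono fun _ ht => min_eq_left ht) (hf.inf hg) hf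
      (by rw [interior_Ici, closure_Ioi])
  exact fun t ht => min_eq_left_iff.1 (hmin ht)

lemma growsAtLeast_rpow (μ : ℝ) : GrowsAtLeast μ fun t => t ^ μ :=
  ⟨1, one_pos, .of_forall fun _ => (one_mul _).le⟩

namespace GrowsAtLeast

variable {κ μ ν : ℝ} {f g h k : ℝ → ℝ}

lemma const_mul {b : ℝ} (hb : 0 < b) (hg : GrowsAtLeast μ g) :
    GrowsAtLeast μ fun t => b * g t := by
  obtain ⟨c, hc, hcg⟩ := hg
  refine ⟨b * c, mul_pos hb hc, hcg.mono fun t ht => ?_⟩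
  rw [mul_assoc]
  exact mul_le_mul_of_nonneg_left ht hb.le

lemma mono (hf : GrowsAtLeast μ f) (h : f ≤ᶠ[atTop] g) : GrowsAtLeast μ g := by
  obtain ⟨c, hc, hcf⟩ := hf
  exact ⟨c, hc, EventuallyLE.trans hcf h⟩

lemma mono_ae (hf : GrowsAtLeast μ f) (hg : ContinuousOn g (Ici 0))
    (h : ∀ᵐ t ∂volume.restrict (Ici 0), f t ≤ g t) : GrowsAtLeast μ g := by
  obtain ⟨c, hc, hcf⟩ := hf
  obtain ⟨T, hT⟩ := eventually_atTop.1 (hcf.and (eventually_gt_atTop 0))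
  have hT0 : 0 < T := (hT T le_rfl).2
  have hsub : Ici T ⊆ Ici 0 := Ici_subset_Ici.2 hT0.le
  refine ⟨c, hc, eventually_atTop.2 ⟨T, le_on_Ici_of_ae_le ?_ (hg.mono hsub) ?_⟩⟩
  · exact continuousOn_const.mul
      (continuousOn_id.rpow_const fun t ht => .inl (hT0.trans_le ht).ne')
  · filter_upwards [ae_restrict_of_ae_restrict_of_subset hsub h,
      ae_restrict_mem measurableSet_Ici] with t hfg ht
    exact (hT t ht).1.trans hfg

lemma add_isLittleO (hg : GrowsAtLeast μ g) (hh : h =o[atTop] fun t => t ^ μ) :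
    GrowsAtLeast μ fun t => g t + h t := by
  obtain ⟨c, hc, hcg⟩ := hg
  refine ⟨c / 2, half_pos hc, ?_⟩
  filter_upwards [hcg, hh.bound (half_pos hc), eventually_ge_atTop 0] with t hgt hht ht
  rw [Real.norm_eq_abs, Real.norm_of_nonneg (Real.rpow_nonneg ht μ)] at hht
  linarith [neg_abs_le (h t)]

lemma bddBelow_image_Ici (hg : GrowsAtLeast μ g) (hgc : ContinuousOn g (Ici 0)) :
    BddBelow (g '' Ici 0) := by
  obtain ⟨c, hc, hcg⟩ := hg
  have hnonneg : ∀ᶠ t in atTop, 0 ≤ g t := by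
    filter_upwards [hcg, eventually_ge_atTop 0] with t hgt ht
    exact (by positivity : 0 ≤ c * t ^ μ).trans hgt
  obtain ⟨T, hT⟩ := eventually_atTop.1 hnonneg
  have hcompact : BddBelow (g '' Icc 0 T) :=
    isCompact_Icc.bddBelow_image (hgc.mono Icc_subset_Ici_self)
  have htail : BddBelow (g '' Ici T) := ⟨0, forall_mem_image.2 hT⟩
  refine (hcompact.union htail).mono ?_
  rw [← image_union]
  exact image_mono fun t ht => (le_total t T).imp (fun htT => ⟨ht, htT⟩) id

lemma liminf_pos (hg : GrowsAtLeast μ g) :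
    0 < liminf (fun t : ℝ => ((t ^ (-μ) * g t : ℝ) : EReal)) atTop := by
  obtain ⟨c, hc, hcg⟩ := hg
  refine (EReal.coe_pos.2 hc).trans_le (le_liminf_of_le (by isBoundedDefault) ?_)
  filter_upwards [hcg, eventually_gt_atTop 0] with t hgt ht
  rw [EReal.coe_le_coe_iff]
  calc c = t ^ (-μ) * (c * t ^ μ) := by
        rw [mul_left_comm, ← Real.rpow_add ht, neg_add_cancel, Real.rpow_zero, mul_one]
    _ ≤ t ^ (-μ) * g t := by gcongr

lemma exists_forall_Icc {δ : ℝ} (hδ : 0 < δ) (hg : GrowsAtLeast μ g) :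
    ∃ c > 0, ∀ᶠ t in atTop, ∀ s ∈ Icc (δ * t) t, c * t ^ μ ≤ g s := by
  obtain ⟨c, hc, hcg⟩ := hg
  refine ⟨c * δ ^ |μ|, by positivity, ?_⟩
  have htail : ∀ᶠ t in atTop, ∀ s, δ * t ≤ s → c * s ^ μ ≤ g s :=
    (tendsto_id.const_mul_atTop hδ).eventually (eventually_forall_ge_atTop.2 hcg)
  filter_upwards [htail, eventually_gt_atTop 0] with t hgt ht s ⟨hδs, hst⟩
  calc c * δ ^ |μ| * t ^ μ = c * (δ ^ |μ| * t ^ μ) := mul_assoc ..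
    _ ≤ c * s ^ μ := by
        gcongr
        exact rpow_abs_mul_rpow_le hδ ht hδs hst μ
    _ ≤ g s := hgt s hδs

lemma convolution (hk : GrowsAtLeast κ k) (hg : GrowsAtLeast ν g) (hk0 : ∀ t ≥ 0, 0 ≤ k t)
    (hg0 : ∀ t ≥ 0, 0 ≤ g t)
    (hint : ∀ t ≥ 0, IntervalIntegrable (fun s => k (t - s) * g s) volume 0 t) :
    GrowsAtLeast (κ + ν + 1) fun t => ∫ s in (0 : ℝ)..t, k (t - s) * g s := by
  obtain ⟨c, hc, hck⟩ := hk.exists_forall_Icc (δ := 1 / 3) (by norm_num)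
  obtain ⟨d, hd, hdg⟩ := hg.exists_forall_Icc (δ := 1 / 3) (by norm_num)
  -- On the middle third of `[0, t]` both `s` and `t - s` are comparable to `t`.
  refine ⟨c * d / 3, by positivity, ?_⟩
  filter_upwards [hck, hdg, eventually_gt_atTop 0] with t hkt hgt ht
  have hnonneg : ∀ s ∈ Ioc 0 t, 0 ≤ k (t - s) * g s := fun s hs =>
    mul_nonneg (hk0 _ (sub_nonneg.2 hs.2)) (hg0 _ hs.1.le)
  have hmiddle : ∀ s ∈ Icc (t / 3) (2 * t / 3), c * t ^ κ * (d * t ^ ν) ≤ k (t - s) * g s := by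
    rintro s ⟨hs, hs'⟩
    exact mul_le_mul (hkt _ ⟨by linarith, by linarith⟩) (hgt _ ⟨by linarith, by linarith⟩)
      (by positivity) (hk0 _ (by linarith))
  calc c * d / 3 * t ^ (κ + ν + 1)
      = ∫ _ in t / 3..2 * t / 3, c * t ^ κ * (d * t ^ ν) := by
        rw [intervalIntegral.integral_const, smul_eq_mul, Real.rpow_add ht, Real.rpow_add ht,
          Real.rpow_one]
        ring
    _ ≤ ∫ s in t / 3..2 * t / 3, k (t - s) * g s := by
        refine intervalIntegral.integral_mono_on (by linarith) intervalIntegrable_const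
          ((hint t ht.le).mono_set ?_) hmiddle
        rw [uIcc_of_le (by linarith), uIcc_of_le ht.le]
        exact Icc_subset_Icc (by linarith) (by linarith)
    _ ≤ ∫ s in (0 : ℝ)..t, k (t - s) * g s :=
        intervalIntegral.integral_mono_interval (by linarith) (by linarith) (by linarith)
          (ae_restrict_of_forall_mem measurableSet_Ioc hnonneg) (hint t ht.le)

end GrowsAtLeast

section FractionalIntegral

variable {σ t : ℝ} {f w : ℝ → ℝ}

lemma intervalIntegrable_sub_rpow_mul (hσ : 0 < σ) {x y : ℝ} (hf : ContinuousOn f (uIcc x y)) :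
    IntervalIntegrable (fun s => (t - s) ^ (σ - 1) * f s) volume x y := by
  have h : IntervalIntegrable (fun s : ℝ => s ^ (σ - 1)) volume (t - x) (t - y) :=
    intervalIntegral.intervalIntegrable_rpow' (by linarith)
  have h' := h.comp_sub_left t
  simp only [sub_sub_cancel] at h'
  exact h'.mul_continuousOn hf

lemma rlInt_one (f : ℝ → ℝ) (t : ℝ) : rlInt 1 f t = ∫ s in (0 : ℝ)..t, f s := by
  simp [rlInt]

lemma rlInt_two (f : ℝ → ℝ) (t : ℝ) : rlInt 2 f t = ∫ s in (0 : ℝ)..t, (t - s) * f s := by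
  norm_num [rlInt]

lemma rlInt_congr {g : ℝ → ℝ} (ht : 0 ≤ t) (h : ∀ s ∈ Icc 0 t, f s = g s) :
    rlInt σ f t = rlInt σ g t := by
  unfold rlInt
  congr 1
  refine intervalIntegral.integral_congr fun s hs => ?_
  rw [uIcc_of_le ht] at hs
  simp only [h s hs]

lemma rlInt_nonneg (hσ : 0 < σ) (ht : 0 ≤ t) (hf : ∀ s ∈ Icc 0 t, 0 ≤ f s) : 0 ≤ rlInt σ f t :=
  mul_nonneg (one_div_pos.2 (Real.Gamma_pos_of_pos hσ)).le <|
    intervalIntegral.integral_nonneg ht fun s hs =>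
      mul_nonneg (Real.rpow_nonneg (sub_nonneg.2 hs.2) _) (hf s hs)

lemma rlInt_const (hσ : 0 < σ) (M t : ℝ) :
    rlInt σ (fun _ => M) t = M / Real.Gamma (σ + 1) * t ^ σ := by
  unfold rlInt
  rw [intervalIntegral.integral_mul_const,
    intervalIntegral.integral_comp_sub_left (fun s => s ^ (σ - 1)) t, sub_self, sub_zero,
    integral_rpow (.inl (by linarith)), sub_add_cancel, Real.zero_rpow hσ.ne', sub_zero,
    Real.Gamma_add_one hσ.ne']
  field_simp

lemma rlInt_add_const (hσ : 0 < σ) (ht : 0 ≤ t) (hf : ContinuousOn f (Icc 0 t)) (M : ℝ) :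
    rlInt σ (fun s => f s + M) t = rlInt σ f t + M / Real.Gamma (σ + 1) * t ^ σ := by
  rw [← uIcc_of_le ht] at hf
  rw [← rlInt_const hσ]
  unfold rlInt
  simp only [mul_add]
  rw [intervalIntegral.integral_add (intervalIntegrable_sub_rpow_mul hσ hf)
    (intervalIntegrable_sub_rpow_mul hσ continuousOn_const), mul_add]

lemma continuous_rlInt_one (hw : Continuous w) : Continuous (rlInt 1 w) := by
  rw [funext (rlInt_one w)]
  exact intervalIntegral.continuous_primitive (fun _ _ => hw.intervalIntegrable _ _) 0

lemma continuous_rlInt_two (hw : Continuous w) : Continuous (rlInt 2 w) := by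
  rw [funext (rlInt_two w)]
  exact intervalIntegral.continuous_parametric_intervalIntegral_of_continuous
    (f := fun t s => (t - s) * w s) (by fun_prop) continuous_id

lemma rlInt_add_one (hσ : 0 < σ) (ht : 0 ≤ t) (hw : Continuous w) :
    rlInt (σ + 1) w t = rlInt σ (rlInt 1 w) t := by
  have hW : ∀ s, HasDerivAt (rlInt 1 w) (w s) s := fun s => by
    rw [funext (rlInt_one w)]
    exact (hw.integral_hasStrictDerivAt 0 s).hasDerivAt
  have hpow : ∀ s ∈ Ioo (min 0 t) (max 0 t),
      HasDerivAt (fun s => (t - s) ^ σ) (-σ * (t - s) ^ (σ - 1)) s := fun s hs => by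
    have hst : t - s ≠ 0 := (sub_pos.2 (max_eq_right ht ▸ hs.2)).ne'
    exact (((hasDerivAt_id s).const_sub t).rpow_const (.inl hst)).congr_deriv (by simp)
  have hpow_cont : Continuous fun s => (t - s) ^ σ :=
    (continuous_const.sub continuous_id).rpow_const fun _ => .inr hσ.le
  have hpow_int : IntervalIntegrable (fun s => -σ * (t - s) ^ (σ - 1)) volume 0 t := by
    simpa using (intervalIntegrable_sub_rpow_mul hσ (t := t)
      (continuousOn_const (c := (1 : ℝ)))).const_mul (-σ)
  have hparts : ∫ s in (0 : ℝ)..t, (t - s) ^ σ * w s =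
      σ * ∫ s in (0 : ℝ)..t, (t - s) ^ (σ - 1) * rlInt 1 w s := by
    rw [intervalIntegral.integral_mul_deriv_eq_deriv_mul_of_hasDerivAt hpow_cont.continuousOn
      (continuous_rlInt_one hw).continuousOn hpow (fun s _ => hW s) hpow_int
      (hw.intervalIntegrable _ _)]
    simp [rlInt_one w 0, Real.zero_rpow hσ.ne', mul_assoc]
  unfold rlInt at hparts ⊢
  rw [add_sub_cancel_right, hparts, Real.Gamma_add_one hσ.ne']
  field_simp

lemma rlInt_add_two (hσ : 0 < σ) (ht : 0 ≤ t) (hw : Continuous w) :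
    rlInt (σ + 2) w t = rlInt σ (rlInt 2 w) t := by
  have htwo : ∀ s ∈ Icc 0 t, rlInt 1 (rlInt 1 w) s = rlInt 2 w s := fun s hs => by
    rw [← rlInt_add_one one_pos hs.1 hw, one_add_one_eq_two]
  calc rlInt (σ + 2) w t = rlInt (σ + 1 + 1) w t := by rw [add_assoc, one_add_one_eq_two]
    _ = rlInt (σ + 1) (rlInt 1 w) t := rlInt_add_one (by linarith) ht hw
    _ = rlInt σ (rlInt 1 (rlInt 1 w)) t := rlInt_add_one hσ ht (continuous_rlInt_one hw)
    _ = rlInt σ (rlInt 2 w) t := rlInt_congr ht htwo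

lemma growsAtLeast_rlInt_of_nonneg_of_pos (hσ : 0 < σ) (hfc : ContinuousOn f (Ici 0))
    (hf0 : ∀ s ≥ 0, 0 ≤ f s) (hfpos : ∃ s ≥ 0, 0 < f s) : GrowsAtLeast (σ - 1) (rlInt σ f) := by
  obtain ⟨s₀, hs₀, hfs₀⟩ := hfpos
  set T := s₀ + 1
  have hG := Real.Gamma_pos_of_pos hσ
  have hfT : ContinuousOn f (Icc 0 T) := hfc.mono Icc_subset_Ici_self
  have hmass : 0 < ∫ s in (0 : ℝ)..T, f s :=
    intervalIntegral.integral_pos (by linarith) hfT (fun s hs => hf0 s hs.1.le)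
      ⟨s₀, ⟨hs₀, by linarith⟩, hfs₀⟩
  suffices GrowsAtLeast (σ - 1) fun t => ∫ s in (0 : ℝ)..t, (t - s) ^ (σ - 1) * f s from
    this.const_mul (one_div_pos.2 hG)
  refine ⟨(1 / 2) ^ |σ - 1| * ∫ s in (0 : ℝ)..T, f s, by positivity, ?_⟩
  filter_upwards [eventually_ge_atTop (2 * T)] with t ht
  have hint : ∀ {y}, 0 ≤ y →
      IntervalIntegrable (fun s => (t - s) ^ (σ - 1) * f s) volume 0 y := fun hy =>
    intervalIntegrable_sub_rpow_mul hσ (hfc.mono (uIcc_of_le hy ▸ Icc_subset_Ici_self))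
  calc (1 / 2) ^ |σ - 1| * (∫ s in (0 : ℝ)..T, f s) * t ^ (σ - 1)
      = ∫ s in (0 : ℝ)..T, (1 / 2) ^ |σ - 1| * t ^ (σ - 1) * f s := by
        rw [intervalIntegral.integral_const_mul]
        ring
    _ ≤ ∫ s in (0 : ℝ)..T, (t - s) ^ (σ - 1) * f s := by
        refine intervalIntegral.integral_mono_on (by linarith)
          ((hfT.intervalIntegrable_of_Icc (by linarith)).const_mul _) (hint (by linarith))
          fun s hs => mul_le_mul_of_nonneg_right ?_ (hf0 s hs.1)
        exact rpow_abs_mul_rpow_le (by norm_num) (by linarith) (by linarith [hs.2])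
          (by linarith [hs.1]) _
    _ ≤ ∫ s in (0 : ℝ)..t, (t - s) ^ (σ - 1) * f s :=
        intervalIntegral.integral_mono_interval le_rfl (by linarith) (by linarith)
          (ae_restrict_of_forall_mem measurableSet_Ioc fun s hs =>
            mul_nonneg (Real.rpow_nonneg (by linarith [hs.2]) _) (hf0 s hs.1.le))
          (hint (by linarith))

lemma GrowsAtLeast.rlInt_of_nonneg {ν : ℝ} (hf : GrowsAtLeast ν f) (hσ : 0 < σ)
    (hfc : ContinuousOn f (Ici 0)) (hf0 : ∀ t ≥ 0, 0 ≤ f t) : GrowsAtLeast (σ + ν) (rlInt σ f) := by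
  have hconv := (growsAtLeast_rpow (σ - 1)).convolution hf (fun t ht => Real.rpow_nonneg ht _) hf0
    fun t ht => intervalIntegrable_sub_rpow_mul hσ
      (hfc.mono (uIcc_of_le ht ▸ Icc_subset_Ici_self))
  rw [sub_add_eq_add_sub, sub_add_cancel] at hconv
  exact hconv.const_mul (one_div_pos.2 (Real.Gamma_pos_of_pos hσ))

lemma GrowsAtLeast.rlInt_of_pos {ν : ℝ} (hf : GrowsAtLeast ν f) (hσ : 0 < σ) (hν : 0 < ν)
    (hfc : ContinuousOn f (Ici 0)) : GrowsAtLeast (σ + ν) (rlInt σ f) := by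
  -- Subtracting a lower bound `m` makes `f` nonnegative and costs only `O(t ^ σ)`.
  obtain ⟨m, hm⟩ := hf.bddBelow_image_Ici hfc
  have hconst : ∀ M : ℝ, (fun _ => M) =o[atTop] fun t : ℝ => t ^ ν := fun M =>
    isLittleO_const_left.2 (.inr (tendsto_norm_atTop_atTop.comp (tendsto_rpow_atTop hν)))
  have hshift : GrowsAtLeast (σ + ν) (rlInt σ fun t => f t + -m) :=
    (hf.add_isLittleO (hconst (-m))).rlInt_of_nonneg hσ (hfc.add continuousOn_const) fun t ht => by
      linarith [hm (mem_image_of_mem f ht)]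
  have hcorr : (fun t : ℝ => m / Real.Gamma (σ + 1) * t ^ σ) =o[atTop] fun t => t ^ (σ + ν) := by
    have hmul := (isBigO_refl (fun t : ℝ => t ^ σ) atTop).mul_isLittleO
      (hconst (m / Real.Gamma (σ + 1)))
    refine hmul.congr' (.of_forall fun t => mul_comm ..) ?_
    filter_upwards [eventually_gt_atTop 0] with t ht using (Real.rpow_add ht ..).symm
  refine (hshift.add_isLittleO hcorr).mono ?_
  filter_upwards [eventually_ge_atTop 0] with t ht
  rw [rlInt_add_const hσ ht (hfc.mono Icc_subset_Ici_self), neg_div, neg_mul, neg_add_cancel_right]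

end FractionalIntegral

/-- The response `k` of the oscillator `y'' + ω² y` to the ramp `τ ↦ τ`: `k'' + ω² k = τ` with
`k(0) = k'(0) = 0`. It is the second primitive of the fundamental solution `sin (ω τ) / ω` and
serves as the Duhamel kernel for the second primitive of a solution. -/
noncomputable def rampResponse (ω τ : ℝ) : ℝ :=
  (τ - Real.sin (ω * τ) / ω) / ω ^ 2

section Oscillator

variable {ω : ℝ} {w : ℝ → ℝ}

lemma continuous_rampResponse (ω : ℝ) : Continuous (rampResponse ω) := by
  unfold rampResponse
  fun_prop

lemma hasDerivAt_rampResponse (hω : ω ≠ 0) (τ : ℝ) :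
    HasDerivAt (rampResponse ω) ((1 - Real.cos (ω * τ)) / ω ^ 2) τ := by
  have hsin := ((hasDerivAt_id τ).const_mul ω).sin.div_const ω
  refine (((hasDerivAt_id τ).sub hsin).div_const (ω ^ 2)).congr_deriv ?_
  simp only [id_eq]
  field_simp

lemma rampResponse_nonneg (hω : 0 < ω) {τ : ℝ} (hτ : 0 ≤ τ) : 0 ≤ rampResponse ω τ := by
  have hsin : Real.sin (ω * τ) / ω ≤ τ :=
    (div_le_iff₀' hω).2 (Real.sin_le (by positivity))
  exact div_nonneg (sub_nonneg.2 hsin) (sq_nonneg ω)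

lemma isBigO_sin_mul_one (ω : ℝ) :
    (fun τ => Real.sin (ω * τ)) =O[atTop] fun _ => (1 : ℝ) :=
  .of_norm_le fun _ => Real.abs_sin_le_one _

lemma growsAtLeast_rampResponse (hω : ω ≠ 0) : GrowsAtLeast 1 (rampResponse ω) := by
  have hlin : GrowsAtLeast 1 fun τ : ℝ => (ω ^ 2)⁻¹ * τ ^ (1 : ℝ) :=
    (growsAtLeast_rpow 1).const_mul (by positivity)
  have hosc : (fun τ => -(ω ^ 3)⁻¹ * Real.sin (ω * τ)) =o[atTop] fun τ : ℝ => τ ^ (1 : ℝ) := by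
    simp only [Real.rpow_one]
    exact ((isBigO_sin_mul_one ω).trans_isLittleO (isLittleO_const_id_atTop 1)).const_mul_left _
  convert! hlin.add_isLittleO hosc using 2 with τ
  rw [rampResponse, Real.rpow_one]
  field_simp
  ring

lemma isBigO_rampResponse (ω : ℝ) : rampResponse ω =O[atTop] fun τ => τ := by
  have hsin := (isBigO_sin_mul_one ω).trans (isLittleO_const_id_atTop (1 : ℝ)).isBigO
  have hdiff := (isBigO_refl (fun τ : ℝ => τ) atTop).sub (hsin.const_mul_left ω⁻¹)
  refine (hdiff.const_mul_left (ω ^ 2)⁻¹).congr_left fun τ => ?_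
  rw [rampResponse]
  ring

lemma isBigO_one_sub_cos (ω : ℝ) :
    (fun τ => 1 - Real.cos (ω * τ)) =O[atTop] fun τ => τ := by
  have hone := (isLittleO_const_id_atTop (1 : ℝ)).isBigO
  have hcos : (fun τ => Real.cos (ω * τ)) =O[atTop] fun _ => (1 : ℝ) :=
    .of_norm_le fun _ => Real.abs_cos_le_one _
  exact hone.sub (hcos.trans hone)

lemma rlInt_two_eq_duhamel (hω : ω ≠ 0) (hw : ContDiff ℝ 2 w) (t : ℝ) :
    rlInt 2 w t = (∫ s in (0 : ℝ)..t, rampResponse ω (t - s) * (deriv (deriv w) s + ω ^ 2 * w s))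
      + (rampResponse ω t * deriv w 0 + (1 - Real.cos (ω * t)) / ω ^ 2 * w 0) := by
  have hw' : ContDiff ℝ 1 (deriv w) := hw.deriv'
  have hcw : Continuous w := hw.continuous
  have hcr := continuous_rampResponse ω
  have hderiv : ∀ s, HasDerivAt
      (fun s => rampResponse ω (t - s) * deriv w s + (1 - Real.cos (ω * (t - s))) / ω ^ 2 * w s)
      (rampResponse ω (t - s) * (deriv (deriv w) s + ω ^ 2 * w s) - (t - s) * w s) s := by
    intro s
    have hsub : HasDerivAt (fun s => t - s) (-1) s := (hasDerivAt_id s).const_sub t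
    have hk := (hasDerivAt_rampResponse hω (t - s)).comp s hsub
    have hk' := ((hsub.const_mul ω).cos.const_sub 1).div_const (ω ^ 2)
    have hdw := (hw.differentiable two_ne_zero s).hasDerivAt
    have hdw' := (hw'.differentiable one_ne_zero s).hasDerivAt
    refine ((hk.mul hdw').add (hk'.mul hdw)).congr_deriv ?_
    simp only [rampResponse, Function.comp_apply]
    field_simp
    ring
  have hcF : Continuous fun s =>
      rampResponse ω (t - s) * (deriv (deriv w) s + ω ^ 2 * w s) := by fun_prop
  have hcV : Continuous fun s => (t - s) * w s := by fun_prop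
  have hftc := intervalIntegral.integral_eq_sub_of_hasDerivAt (a := 0) (b := t)
    (fun s _ => hderiv s) ((hcF.sub hcV).intervalIntegrable _ _)
  rw [intervalIntegral.integral_sub (hcF.intervalIntegrable _ _) (hcV.intervalIntegrable _ _),
    ← rlInt_two] at hftc
  have hramp_zero : rampResponse ω 0 = 0 := by simp [rampResponse]
  simp only [sub_self, sub_zero, mul_zero, Real.cos_zero, zero_div, zero_mul, hramp_zero] at hftc
  linarith

lemma GrowsAtLeast.rlInt_two_of_oscillator {ν : ℝ} (hω : 0 < ω) (hν : -1 < ν)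
    (hw : ContDiff ℝ 2 w) (hF0 : ∀ t ≥ 0, 0 ≤ deriv (deriv w) t + ω ^ 2 * w t)
    (hF : GrowsAtLeast ν fun t => deriv (deriv w) t + ω ^ 2 * w t) :
    GrowsAtLeast (2 + ν) (rlInt 2 w) := by
  have hcw : Continuous w := hw.continuous
  have hcr := continuous_rampResponse ω
  have hforced := (growsAtLeast_rampResponse hω.ne').convolution hF
    (fun _ => rampResponse_nonneg hω) hF0
    fun t _ => Continuous.intervalIntegrable (by fun_prop) 0 t
  rw [show 1 + ν + 1 = 2 + ν by ring] at hforced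
  have hinitial : (fun t => rampResponse ω t * deriv w 0 + (1 - Real.cos (ω * t)) / ω ^ 2 * w 0)
      =O[atTop] fun t => t := by
    refine ((isBigO_rampResponse ω).const_mul_left (deriv w 0)).add
      ((isBigO_one_sub_cos ω).const_mul_left (w 0 / ω ^ 2)) |>.congr_left fun t => ?_
    ring
  rw [funext (rlInt_two_eq_duhamel hω.ne' hw)]
  exact hforced.add_isLittleO (hinitial.trans_isLittleO (isLittleO_id_rpow_atTop (by linarith)))

theorem GrowsAtLeast.rlInt_of_oscillator {ν β : ℝ} (hω : 0 < ω) (hν : -1 < ν) (hβ : 2 ≤ β)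
    (hw : ContDiff ℝ 2 w) (hF0 : ∀ t ≥ 0, 0 ≤ deriv (deriv w) t + ω ^ 2 * w t)
    (hF : GrowsAtLeast ν fun t => deriv (deriv w) t + ω ^ 2 * w t) :
    GrowsAtLeast (β + ν) (rlInt β w) := by
  have htwo : GrowsAtLeast (2 + ν) (rlInt 2 w) := rlInt_two_of_oscillator hω hν hw hF0 hF
  rcases hβ.eq_or_lt with rfl | hβ
  · exact htwo
  have hlift := htwo.rlInt_of_pos (sub_pos.2 hβ) (by linarith)
    (continuous_rlInt_two hw.continuous).continuousOn
  rw [← add_assoc, sub_add_cancel] at hlift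
  refine hlift.mono ?_
  filter_upwards [eventually_ge_atTop 0] with t ht
  rw [← rlInt_add_two (sub_pos.2 hβ) ht hw.continuous, sub_add_cancel]

end Oscillator

theorem liminf_pos_wave_general {γ a b β : ℝ} {w f : ℝ → ℝ} (hγ : 0 < γ) (ha : 0 < a) (hb : 0 < b)
    (hβ : 2 ≤ β) (hw : ContDiff ℝ 2 w) (hfc : ContinuousOn f (Ici 0)) (hf0 : ∀ t ≥ 0, 0 ≤ f t)
    (hfpos : ∃ t ≥ 0, 0 < f t)
    (hineq : ∀ᵐ t ∂volume.restrict (Ici 0), b * rlInt γ f t ≤ deriv (deriv w) t + a * w t) :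
    0 < liminf (fun t : ℝ => ((t ^ (1 - γ - β) * rlInt β w t : ℝ) : EReal)) atTop := by
  obtain ⟨ω, hω, rfl⟩ : ∃ ω, 0 < ω ∧ ω ^ 2 = a := ⟨√a, Real.sqrt_pos.2 ha, Real.sq_sqrt ha.le⟩
  have hF : ContinuousOn (fun t => deriv (deriv w) t + ω ^ 2 * w t) (Ici 0) :=
    (hw.deriv'.continuous_deriv_one.add (hw.continuous.const_mul _)).continuousOn
  have hF0 : ∀ t ≥ 0, 0 ≤ deriv (deriv w) t + ω ^ 2 * w t := by
    refine le_on_Ici_of_ae_le continuousOn_const hF ?_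
    filter_upwards [hineq, ae_restrict_mem measurableSet_Ici] with t hFt ht
    exact (mul_nonneg hb.le (rlInt_nonneg hγ ht fun s hs => hf0 s hs.1)).trans hFt
  have hFgrows : GrowsAtLeast (γ - 1) fun t => deriv (deriv w) t + ω ^ 2 * w t :=
    ((growsAtLeast_rlInt_of_nonneg_of_pos hγ hfc hf0 hfpos).const_mul hb).mono_ae hF hineq
  have hgrows := GrowsAtLeast.rlInt_of_oscillator hω (by linarith) hβ hw hF0 hFgrows
  rw [show 1 - γ - β = -(β + (γ - 1)) by ring]
  exact hgrows.liminf_pos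

/-- Corollary 2.6 (iii): for β ≥ 2, liminf t^{1−γ−β} (₀I_t^β w)(t) > 0. -/
theorem liminf_pos_wave
    (γ p a b : ℝ) (w : ℝ → ℝ)
    (hγ : 0 < γ) (hp : 1 < p) (ha : 0 < a) (hb : 0 < b)
    (hw : ContDiff ℝ 2 w)
    (hw0 : ∃ t : ℝ, 0 ≤ t ∧ w t ≠ 0)
    (hineq : ∀ᵐ t ∂(volume.restrict (Set.Ici (0:ℝ))),
      deriv (deriv w) t + a * w t ≥ b * rlInt γ (fun s => |w s| ^ p) t)
    (β : ℝ) (hβ : 2 ≤ β) :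
    0 < liminf (fun t : ℝ => ((t ^ (1 - γ - β) * rlInt β w t : ℝ) : EReal)) atTop := by
  have hfc : Continuous fun s => |w s| ^ p :=
    hw.continuous.abs.rpow_const fun _ => .inr (by linarith)
  obtain ⟨t₀, ht₀, hwt₀⟩ := hw0
  exact liminf_pos_wave_general hγ ha hb hβ hw hfc.continuousOn (fun t _ => by positivity)
    ⟨t₀, ht₀, Real.rpow_pos_of_pos (abs_pos.2 hwt₀) p⟩ hineq
end
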